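/- arXiv:2003.07949 — 4 statements merged into one kernel-verified Lean document; each statement's English description precedes it below -/
import Mathlib

section
/- Let N ≥ ν, where ν is the observability index, and let S be any matrix with orthonormal columns whose column space equals the column space of the observability matrix O_N. Then there exists a matrix M ∈ ℝ^{q×q} (q = Rank(O_N)) such that (i) M(S^⊤ O_N x) = S^⊤ O_N A x for every x in the orthogonal complement of Ker(O_N), and (ii) for every initial state x0 ∈ ℝ^n, the nominal feature vector sequence w(k) = S^⊤ O_N A^k x0 satisfies w(k+1) = M w(k) for all k ∈ ℕ. -/
open Matrix

noncomputable section

/-- The observability matrix `O_N = [C; CA; …; CA^{N-1}]`, with block rows indexed by `Fin N`. -/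
def obsMat {n p : ℕ} (A : Matrix (Fin n) (Fin n) ℝ) (C : Matrix (Fin p) (Fin n) ℝ)
    (N : ℕ) : Matrix (Fin N × Fin p) (Fin n) ℝ :=
  fun ir j => (C * A ^ (ir.1 : ℕ)) ir.2 j

/-- The observability index `ν = min {N : Rank O_N = Rank O_{N+j} for all j}`. -/
def obsIndex {n p : ℕ} (A : Matrix (Fin n) (Fin n) ℝ) (C : Matrix (Fin p) (Fin n) ℝ) : ℕ :=
  sInf {N : ℕ | ∀ j : ℕ, (obsMat A C (N + j)).rank = (obsMat A C N).rank}

/-- The Krylov/excitability matrix `E_N(x) = [x, Ax, …, A^{N-1} x]`. -/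
def excMat {n : ℕ} (A : Matrix (Fin n) (Fin n) ℝ) (x : Fin n → ℝ) (N : ℕ) :
    Matrix (Fin n) (Fin N) ℝ :=
  fun i k => (A ^ (k : ℕ)).mulVec x i

/-- The excitability index at `x`: `μ(x) = min {i : Rank E_i(x) = Rank E_{i+j}(x) for all j}`. -/
def excIndexAt {n : ℕ} (A : Matrix (Fin n) (Fin n) ℝ) (x : Fin n → ℝ) : ℕ :=
  sInf {i : ℕ | ∀ j : ℕ, (excMat A x (i + j)).rank = (excMat A x i).rank}

/-- The excitability index `μ = max_{x ∈ ℝⁿ} μ(x)`. -/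
def excIndex {n : ℕ} (A : Matrix (Fin n) (Fin n) ℝ) : ℕ :=
  sSup (Set.range (excIndexAt A))

/-- The Hankel matrix `Y_{N,T}` of the nominal output `y(k) = C A^k x0`; its `j`-th column is
the stacked vector `(y(j), …, y(j+N-1))`. -/
def hankelMat {n p : ℕ} (A : Matrix (Fin n) (Fin n) ℝ) (C : Matrix (Fin p) (Fin n) ℝ)
    (x0 : Fin n → ℝ) (N T : ℕ) : Matrix (Fin N × Fin p) (Fin (T - N + 1)) ℝ :=
  fun ir j => (C * A ^ ((j : ℕ) + (ir.1 : ℕ))).mulVec x0 ir.2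

/-- The Hankel information `Γ({y(k)}) = sup {Rank Y_{N,T} : N ≤ T}`. -/
def hankelInfo {n p : ℕ} (A : Matrix (Fin n) (Fin n) ℝ) (C : Matrix (Fin p) (Fin n) ℝ)
    (x0 : Fin n → ℝ) : ℕ :=
  sSup {r : ℕ | ∃ N T : ℕ, N ≤ T ∧ r = (hankelMat A C x0 N T).rank}

lemma obsMat_mulVec_zero_iff {n p : ℕ} (A : Matrix (Fin n) (Fin n) ℝ) (C : Matrix (Fin p) (Fin n) ℝ)
    (N : ℕ) (v : Fin n → ℝ) :
    (obsMat A C N).mulVec v = 0 ↔ ∀ i < N, (C * A ^ i).mulVec v = 0 := by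
  constructor
  · intro h i hi
    funext r
    exact congrFun h (⟨i, hi⟩, r)
  · intro h
    funext ir
    exact congrFun (h ir.1 ir.1.2) ir.2

lemma obsKer_anti {n p : ℕ} (A : Matrix (Fin n) (Fin n) ℝ) (C : Matrix (Fin p) (Fin n) ℝ)
    {N N' : ℕ} (h : N ≤ N') :
    LinearMap.ker (obsMat A C N').mulVecLin ≤ LinearMap.ker (obsMat A C N).mulVecLin := by
  intro v hv
  rw [LinearMap.mem_ker, Matrix.mulVecLin_apply, obsMat_mulVec_zero_iff] at hv ⊢
  exact fun i hi => hv i (hi.trans_le h)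

lemma obsRank_add {n p : ℕ} (A : Matrix (Fin n) (Fin n) ℝ) (C : Matrix (Fin p) (Fin n) ℝ)
    (N : ℕ) : (obsMat A C N).rank +
      Module.finrank ℝ (LinearMap.ker (obsMat A C N).mulVecLin) = n := by
  have := LinearMap.finrank_range_add_finrank_ker (obsMat A C N).mulVecLin
  simpa [Matrix.rank] using this

lemma obsSet_nonempty {n p : ℕ} (A : Matrix (Fin n) (Fin n) ℝ) (C : Matrix (Fin p) (Fin n) ℝ) :
    {N : ℕ | ∀ j : ℕ, (obsMat A C (N + j)).rank = (obsMat A C N).rank}.Nonempty := by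
  obtain ⟨N, hN⟩ := IsArtinian.monotone_stabilizes (R := ℝ) (M := Fin n → ℝ)
    ⟨fun N => OrderDual.toDual (LinearMap.ker (obsMat A C N).mulVecLin),
      fun a b h => obsKer_anti A C h⟩
  refine ⟨N, fun j => ?_⟩
  have h : LinearMap.ker (obsMat A C N).mulVecLin = LinearMap.ker (obsMat A C (N + j)).mulVecLin :=
    hN (N + j) (Nat.le_add_right _ _)
  have h1 := obsRank_add A C N
  have h2 := obsRank_add A C (N + j)
  rw [← h] at h2
  omega

lemma obsKer_invariant {n p : ℕ} (A : Matrix (Fin n) (Fin n) ℝ) (C : Matrix (Fin p) (Fin n) ℝ)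
    (N : ℕ) (hN : obsIndex A C ≤ N) (v : Fin n → ℝ) (hv : (obsMat A C N).mulVec v = 0) :
    (obsMat A C N).mulVec (A.mulVec v) = 0 := by
  have hmem : ∀ j : ℕ, (obsMat A C (obsIndex A C + j)).rank = (obsMat A C (obsIndex A C)).rank :=
    Nat.sInf_mem (obsSet_nonempty A C)
  obtain ⟨d, rfl⟩ := Nat.exists_eq_add_of_le hN
  have e1 := hmem d
  have e2 := hmem (d + 1)
  have h1 := obsRank_add A C (obsIndex A C + d)
  have h2 := obsRank_add A C (obsIndex A C + (d + 1))
  have hk := Submodule.eq_of_le_of_finrank_eq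
    (obsKer_anti A C (show obsIndex A C + d ≤ obsIndex A C + (d + 1) by omega)) (by omega)
  have hv' : v ∈ LinearMap.ker (obsMat A C (obsIndex A C + (d + 1))).mulVecLin := by
    rw [hk]; exact hv
  rw [LinearMap.mem_ker, Matrix.mulVecLin_apply, obsMat_mulVec_zero_iff] at hv'
  rw [obsMat_mulVec_zero_iff]
  intro i hi
  rw [Matrix.mulVec_mulVec, Matrix.mul_assoc, ← pow_succ]
  exact hv' (i + 1) (by omega)

/-- **Feature space dynamics (model-based).** For `N ≥ ν` and any matrix `S` with orthonormal
columns with `Col S = Col O_N` (`q = Rank O_N`), there is a matrix `M` such that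
`M (Sᵀ O_N x) = Sᵀ O_N A x` for every `x ⊥ Ker O_N`, and the nominal feature vector sequence
`w(k) = Sᵀ O_N A^k x0` satisfies `w(k+1) = M w(k)` for every initial state `x0` and all `k`. -/
theorem feature_space_dynamics {n p q : ℕ}
    (A : Matrix (Fin n) (Fin n) ℝ) (C : Matrix (Fin p) (Fin n) ℝ) (N : ℕ)
    (hN : obsIndex A C ≤ N)
    (hq : q = (obsMat A C N).rank)
    (S : Matrix (Fin N × Fin p) (Fin q) ℝ)
    (hortho : Sᵀ * S = 1)
    (hcol : LinearMap.range S.mulVecLin = LinearMap.range (obsMat A C N).mulVecLin) :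
    ∃ M : Matrix (Fin q) (Fin q) ℝ,
      (∀ x : Fin n → ℝ,
        (∀ y : Fin n → ℝ, (obsMat A C N).mulVec y = 0 → x ⬝ᵥ y = 0) →
        M.mulVec ((Sᵀ * obsMat A C N).mulVec x) = (Sᵀ * obsMat A C N).mulVec (A.mulVec x)) ∧
      (∀ x0 : Fin n → ℝ, ∀ k : ℕ,
        (Sᵀ * obsMat A C N).mulVec ((A ^ (k + 1)).mulVec x0) =
          M.mulVec ((Sᵀ * obsMat A C N).mulVec ((A ^ k).mulVec x0))) := by
  have key : ∀ x, S.mulVec (Sᵀ.mulVec ((obsMat A C N).mulVec x)) = (obsMat A C N).mulVec x := by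
    intro x
    have hx : (obsMat A C N).mulVecLin x ∈ LinearMap.range S.mulVecLin := by
      rw [hcol]; exact ⟨x, rfl⟩
    obtain ⟨z, hz⟩ := hx
    simp only [Matrix.mulVecLin_apply] at hz
    rw [← hz, Matrix.mulVec_mulVec z Sᵀ S, hortho, Matrix.one_mulVec]
  have hsurj : LinearMap.range (Sᵀ * obsMat A C N).mulVecLin = ⊤ := by
    rw [LinearMap.range_eq_top]
    intro z
    have hz : S.mulVecLin z ∈ LinearMap.range (obsMat A C N).mulVecLin := by
      rw [← hcol]; exact ⟨z, rfl⟩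
    obtain ⟨x, hx⟩ := hz
    refine ⟨x, ?_⟩
    simp only [Matrix.mulVecLin_apply] at hx ⊢
    rw [← Matrix.mulVec_mulVec, hx, Matrix.mulVec_mulVec, hortho, Matrix.one_mulVec]
  obtain ⟨g, hg⟩ := LinearMap.exists_rightInverse_of_surjective _ hsurj
  have main : ∀ x, (LinearMap.toMatrix' ((Sᵀ * obsMat A C N * A).mulVecLin ∘ₗ g)).mulVec
      ((Sᵀ * obsMat A C N).mulVec x) = (Sᵀ * obsMat A C N).mulVec (A.mulVec x) := by
    intro x
    rw [← Matrix.toLin'_apply, Matrix.toLin'_toMatrix', LinearMap.comp_apply,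
      Matrix.mulVecLin_apply, ← Matrix.mulVec_mulVec]
    set y := g ((Sᵀ * obsMat A C N).mulVec x) with hy
    have h1 : (Sᵀ * obsMat A C N).mulVec y = (Sᵀ * obsMat A C N).mulVec x :=
      LinearMap.congr_fun hg ((Sᵀ * obsMat A C N).mulVec x)
    have h2 : (obsMat A C N).mulVec (y - x) = 0 := by
      rw [← key, Matrix.mulVec_mulVec (y - x) Sᵀ, Matrix.mulVec_sub, h1, sub_self,
        Matrix.mulVec_zero]
    have h3 := obsKer_invariant A C N hN _ h2
    rw [← sub_eq_zero, ← Matrix.mulVec_sub, ← Matrix.mulVec_sub, ← Matrix.mulVec_mulVec, h3,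
      Matrix.mulVec_zero]
  refine ⟨_, fun x _ => main x, fun x0 k => ?_⟩
  rw [main, Matrix.mulVec_mulVec x0 A, ← pow_succ']
end
end

section
/- Let y(k) = C A^k x0 be the nominal output from initial state x0, and let N ≤ T. If V ⊆ ℝ^n is any subspace such that x0 ∈ V, A V ⊆ V, and V is contained in the orthogonal complement of Ker(O_N), then Rank(Y_{N,T}) ≤ dim(V). -/
open Matrix

noncomputable section

/-- If `V` is an `A`-invariant subspace contained in the orthogonal complement of `Ker O_N`
with `x0 ∈ V`, then `Rank Y_{N,T} ≤ dim V`. -/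
theorem hankel_rank_le_dim_invariant {n p : ℕ}
    (A : Matrix (Fin n) (Fin n) ℝ) (C : Matrix (Fin p) (Fin n) ℝ) (x0 : Fin n → ℝ)
    (N T : ℕ) (hNT : N ≤ T)
    (V : Submodule ℝ (Fin n → ℝ))
    (hx0 : x0 ∈ V)
    (hAV : ∀ v ∈ V, A.mulVec v ∈ V)
    (hVperp : ∀ v ∈ V, ∀ y : Fin n → ℝ, (obsMat A C N).mulVec y = 0 → v ⬝ᵥ y = 0) :
    (hankelMat A C x0 N T).rank ≤ Module.finrank ℝ V := by
  have hpow : ∀ k : ℕ, (A ^ k).mulVec x0 ∈ V := by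
    intro k
    induction k with
    | zero => simpa using hx0
    | succ k ih =>
      rw [pow_succ', ← Matrix.mulVec_mulVec]
      exact hAV _ ih
  rw [Matrix.rank_eq_finrank_span_cols]
  refine le_trans (Submodule.finrank_mono (t := V.map (obsMat A C N).mulVecLin) ?_)
    (Submodule.finrank_map_le _ _)
  rw [Submodule.span_le]
  rintro _ ⟨j, rfl⟩
  refine ⟨(A ^ (j : ℕ)).mulVec x0, hpow _, ?_⟩
  funext ir
  have h : (hankelMat A C x0 N T).col j ir
      = ((C * A ^ (ir.1 : ℕ)).mulVec ((A ^ (j : ℕ)).mulVec x0)) ir.2 := by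
    rw [Matrix.mulVec_mulVec, Matrix.mul_assoc, ← pow_add, add_comm (ir.1 : ℕ) (j : ℕ)]
    rfl
  rw [h]
  rfl
end
end

section
/- Let y(k) = C A^k x0 be the nominal output from initial state x0 ∈ ℝ^n. Then the Hankel information satisfies Γ({y(k)}) ≤ min{ν p, μ}, where ν is the observability index, p is the number of outputs, and μ is the excitability index. -/
open Matrix

noncomputable section

theorem pow_comb {n : ℕ} (A : Matrix (Fin n) (Fin n) ℝ) (k : ℕ) :
    ∃ c : Fin n → ℝ, A ^ k = ∑ i : Fin n, c i • A ^ (i : ℕ) := by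
  rcases Nat.eq_zero_or_pos n with h | h
  · subst h
    exact ⟨fun _ => 0, Subsingleton.elim _ _⟩
  · have hd : A.charpoly.natDegree = n := by
      rw [Matrix.charpoly_natDegree_eq_dim, Fintype.card_fin]
    have h1 : A.charpoly ≠ 1 := by
      intro h1
      rw [h1, Polynomial.natDegree_one] at hd
      omega
    have hlt := Polynomial.natDegree_modByMonic_lt (Polynomial.X ^ k) A.charpoly_monic h1
    rw [hd] at hlt
    refine ⟨fun i => (Polynomial.X ^ k %ₘ A.charpoly).coeff i, ?_⟩
    rw [Matrix.pow_eq_aeval_mod_charpoly A k, Polynomial.aeval_eq_sum_range' hlt,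
      Finset.sum_range]

theorem excMat_rank_mono {n : ℕ} (A : Matrix (Fin n) (Fin n) ℝ) (x : Fin n → ℝ) {i j : ℕ}
    (h : i ≤ j) : (excMat A x i).rank ≤ (excMat A x j).rank :=
  Matrix.rank_submatrix_le (excMat A x j) id (Fin.castLE h)

theorem obsMat_rank_mono {n p : ℕ} (A : Matrix (Fin n) (Fin n) ℝ)
    (C : Matrix (Fin p) (Fin n) ℝ) {i j : ℕ}
    (h : i ≤ j) : (obsMat A C i).rank ≤ (obsMat A C j).rank :=
  Matrix.rank_submatrix_le (obsMat A C j) (fun q : Fin i × Fin p => (Fin.castLE h q.1, q.2)) id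

theorem excMat_rank_le {n : ℕ} (A : Matrix (Fin n) (Fin n) ℝ) (x : Fin n → ℝ) (m : ℕ) :
    (excMat A x m).rank ≤ (excMat A x n).rank := by
  choose c hc using pow_comb A
  have : excMat A x m = excMat A x n * Matrix.of (fun (i : Fin n) (k : Fin m) => c k i) := by
    ext a k
    rw [Matrix.mul_apply]
    simp only [excMat, Matrix.of_apply]
    rw [hc k, Matrix.sum_mulVec, Finset.sum_apply]
    refine Finset.sum_congr rfl fun i _ => ?_
    rw [Matrix.smul_mulVec, Pi.smul_apply, smul_eq_mul, mul_comm]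
  rw [this]
  exact Matrix.rank_mul_le_left _ _

theorem exc_mem {n : ℕ} (A : Matrix (Fin n) (Fin n) ℝ) (x : Fin n → ℝ) :
    n ∈ {i : ℕ | ∀ j : ℕ, (excMat A x (i + j)).rank = (excMat A x i).rank} := fun _ =>
  le_antisymm (excMat_rank_le A x _) (excMat_rank_mono A x (Nat.le_add_right _ _))

theorem excMat_rank_le_excIndex {n : ℕ} (A : Matrix (Fin n) (Fin n) ℝ) (x : Fin n → ℝ) (m : ℕ) :
    (excMat A x m).rank ≤ excIndex A := by
  have h1 : excIndexAt A x ≤ excIndex A :=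
    le_csSup ⟨n, by rintro _ ⟨z, rfl⟩; exact Nat.sInf_le (exc_mem A z)⟩ ⟨x, rfl⟩
  have h2 : ∀ j : ℕ, (excMat A x (excIndexAt A x + j)).rank = (excMat A x (excIndexAt A x)).rank :=
    Nat.sInf_mem ⟨n, exc_mem A x⟩
  calc _ ≤ (excMat A x (excIndexAt A x + m)).rank := excMat_rank_mono A x (Nat.le_add_left _ _)
    _ = (excMat A x (excIndexAt A x)).rank := h2 m
    _ ≤ excIndexAt A x := Matrix.rank_le_width _
    _ ≤ _ := h1

theorem obsMat_rank_le {n p : ℕ} (A : Matrix (Fin n) (Fin n) ℝ)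
    (C : Matrix (Fin p) (Fin n) ℝ) (m : ℕ) :
    (obsMat A C m).rank ≤ obsIndex A C * p := by
  have hb : BddAbove (Set.range fun N => (obsMat A C N).rank) :=
    ⟨n, by rintro _ ⟨N, rfl⟩; exact (Matrix.rank_le_card_width _).trans (Fintype.card_fin n).le⟩
  obtain ⟨N, hN⟩ := Nat.sSup_mem (Set.range_nonempty _) hb
  have hne : {N : ℕ | ∀ j : ℕ, (obsMat A C (N + j)).rank = (obsMat A C N).rank}.Nonempty := by
    refine ⟨N, fun j => le_antisymm ?_ (obsMat_rank_mono A C (Nat.le_add_right _ _))⟩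
    have := le_csSup hb ⟨N + j, rfl⟩
    rw [← hN] at this
    exact this
  have h2 : ∀ j : ℕ, (obsMat A C (obsIndex A C + j)).rank = (obsMat A C (obsIndex A C)).rank :=
    Nat.sInf_mem hne
  calc _ ≤ (obsMat A C (obsIndex A C + m)).rank := obsMat_rank_mono A C (Nat.le_add_left _ _)
    _ = (obsMat A C (obsIndex A C)).rank := h2 m
    _ ≤ _ := (Matrix.rank_le_card_height _).trans (by simp)

theorem hankelMat_eq {n p : ℕ} (A : Matrix (Fin n) (Fin n) ℝ) (C : Matrix (Fin p) (Fin n) ℝ)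
    (x0 : Fin n → ℝ) (N T : ℕ) :
    hankelMat A C x0 N T = obsMat A C N * excMat A x0 (T - N + 1) := by
  ext ir j
  change ((C * A ^ ((j : ℕ) + (ir.1 : ℕ))).mulVec x0) ir.2
    = ((C * A ^ (ir.1 : ℕ)).mulVec ((A ^ (j : ℕ)).mulVec x0)) ir.2
  rw [Matrix.mulVec_mulVec, Matrix.mul_assoc, ← pow_add, add_comm]

/-- **Hankel information bound.** The Hankel information of the nominal output time series
satisfies `Γ({y(k)}) ≤ min {ν p, μ}`. -/
theorem hankelInfo_le {n p : ℕ}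
    (A : Matrix (Fin n) (Fin n) ℝ) (C : Matrix (Fin p) (Fin n) ℝ) (x0 : Fin n → ℝ) :
    hankelInfo A C x0 ≤ min (obsIndex A C * p) (excIndex A) := by
  refine csSup_le ⟨_, 0, 0, le_rfl, rfl⟩ ?_
  rintro _ ⟨N, T, -, rfl⟩
  rw [hankelMat_eq]
  exact le_min ((Matrix.rank_mul_le_left _ _).trans (obsMat_rank_le A C N))
    ((Matrix.rank_mul_le_right _ _).trans (excMat_rank_le_excIndex A x0 _))
end
end

section
/- Let u : ℕ → ℝ^m be an attack input with u(k) = 0 for all k < T, where T ≥ ν + μ + 1, let x(0) = x0 ∈ ℝ^n, and let y^u denote the output of the system driven by u from x0 and y^0 = C A^k x0 the nominal output from the same initial state. Then y^u(k) = y^0(k) for all k ∈ ℕ (i.e., the attack is undetectable by the data-driven monitor) if and only if for every N ∈ ℕ the stacked vector u_{T:T+N−1} = (u(T), …, u(T+N−1)) lies in Ker(C_N). -/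
open Matrix

noncomputable section

/-- The block lower-triangular Toeplitz matrix `C_N` (the `(i,j)` block is `D` if `i = j`,
`C A^{i-j-1} B` if `i > j`, and `0` if `i < j`). -/
def ctrlMat {n p m : ℕ} (A : Matrix (Fin n) (Fin n) ℝ) (B : Matrix (Fin n) (Fin m) ℝ)
    (C : Matrix (Fin p) (Fin n) ℝ) (D : Matrix (Fin p) (Fin m) ℝ) (N : ℕ) :
    Matrix (Fin N × Fin p) (Fin N × Fin m) ℝ :=
  fun ir js =>
    if (ir.1 : ℕ) = (js.1 : ℕ) then D ir.2 js.2
    else if (js.1 : ℕ) < (ir.1 : ℕ) then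
      (C * A ^ ((ir.1 : ℕ) - (js.1 : ℕ) - 1) * B) ir.2 js.2
    else 0

/-- The state trajectory of `x(k+1) = A x(k) + B u(k)` from initial state `x0`. -/
def traj {n m : ℕ} (A : Matrix (Fin n) (Fin n) ℝ) (B : Matrix (Fin n) (Fin m) ℝ)
    (u : ℕ → Fin m → ℝ) (x0 : Fin n → ℝ) : ℕ → Fin n → ℝ
  | 0 => x0
  | k + 1 => A.mulVec (traj A B u x0 k) + B.mulVec (u k)

/-- The output `y(k) = C x(k) + D u(k)` of the system driven by input `u` from `x0`. -/
def output {n p m : ℕ} (A : Matrix (Fin n) (Fin n) ℝ) (B : Matrix (Fin n) (Fin m) ℝ)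
    (C : Matrix (Fin p) (Fin n) ℝ) (D : Matrix (Fin p) (Fin m) ℝ)
    (u : ℕ → Fin m → ℝ) (x0 : Fin n → ℝ) (k : ℕ) : Fin p → ℝ :=
  C.mulVec (traj A B u x0 k) + D.mulVec (u k)

theorem traj_before {n m : ℕ} (A : Matrix (Fin n) (Fin n) ℝ) (B : Matrix (Fin n) (Fin m) ℝ)
    (u : ℕ → Fin m → ℝ) (x0 : Fin n → ℝ) (T : ℕ) (hu : ∀ k : ℕ, k < T → u k = 0) :
    ∀ k, k ≤ T → traj A B u x0 k = (A ^ k).mulVec x0 := by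
  intro k
  induction k with
  | zero => intro _; simp [traj]
  | succ k ih =>
    intro hk
    rw [traj, ih (by omega), hu k (by omega), pow_succ', ← Matrix.mulVec_mulVec]
    simp

theorem traj_after {n m : ℕ} (A : Matrix (Fin n) (Fin n) ℝ) (B : Matrix (Fin n) (Fin m) ℝ)
    (u : ℕ → Fin m → ℝ) (x0 : Fin n → ℝ) (T : ℕ) (hu : ∀ k : ℕ, k < T → u k = 0) (i : ℕ) :
    traj A B u x0 (T + i) = (A ^ (T + i)).mulVec x0 +
      ∑ j ∈ Finset.range i, (A ^ (i - j - 1) * B).mulVec (u (T + j)) := by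
  induction i with
  | zero => simpa using traj_before A B u x0 T hu T le_rfl
  | succ i ih =>
    rw [← add_assoc, traj, ih, Matrix.mulVec_add, Matrix.mulVec_mulVec, ← pow_succ',
      Finset.sum_range_succ, Matrix.mulVec_sum, add_assoc]
    congr 1
    congr 1
    · apply Finset.sum_congr rfl
      intro j hj
      have hj' := Finset.mem_range.1 hj
      rw [Matrix.mulVec_mulVec, ← Matrix.mul_assoc, ← pow_succ']
      congr 3
      omega
    · simp

theorem ctrl_apply {n p m : ℕ}
    (A : Matrix (Fin n) (Fin n) ℝ) (B : Matrix (Fin n) (Fin m) ℝ)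
    (C : Matrix (Fin p) (Fin n) ℝ) (D : Matrix (Fin p) (Fin m) ℝ)
    (v : ℕ → Fin m → ℝ) (N : ℕ) (i : Fin N) (r : Fin p) :
    (ctrlMat A B C D N).mulVec (fun js : Fin N × Fin m => v (js.1 : ℕ) js.2) (i, r) =
      (C.mulVec (∑ j ∈ Finset.range (i : ℕ), (A ^ ((i : ℕ) - j - 1) * B).mulVec (v j))
        + D.mulVec (v i)) r := by
  have h1 : (ctrlMat A B C D N).mulVec (fun js : Fin N × Fin m => v (js.1 : ℕ) js.2) (i, r) =
      ∑ j : Fin N, (fun j : ℕ => if (i : ℕ) = j then D.mulVec (v j) r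
        else if j < (i : ℕ) then (C * A ^ ((i : ℕ) - j - 1) * B).mulVec (v j) r else 0) j := by
    simp only [Matrix.mulVec, dotProduct, Fintype.sum_prod_type, ctrlMat]
    apply Finset.sum_congr rfl
    intro j _
    split_ifs <;> simp
  rw [h1, Fin.sum_univ_eq_sum_range (fun j : ℕ => if (i : ℕ) = j then D.mulVec (v j) r
        else if j < (i : ℕ) then (C * A ^ ((i : ℕ) - j - 1) * B).mulVec (v j) r else 0) N, ← Finset.sum_subset (s₁ := Finset.range ((i : ℕ) + 1)),
    Finset.sum_range_succ, Matrix.mulVec_sum, Pi.add_apply, Finset.sum_apply]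
  · congr 1
    · apply Finset.sum_congr rfl
      intro j hj
      have hj' := Finset.mem_range.1 hj
      rw [if_neg (by omega), if_pos hj', Matrix.mulVec_mulVec, Matrix.mul_assoc]
    · simp
  · intro j hj
    have := i.2
    simp only [Finset.mem_range] at *
    omega
  · intro j _ hj
    simp only [Finset.mem_range] at hj
    rw [if_neg (by omega), if_neg (by omega)]

/-- **Data-driven undetectable attacks.** An attack input `u` with `u(k) = 0` for `k < T`,
where `T ≥ ν + μ + 1`, is undetectable (the attacked output coincides with the nominal
output for all times) if and only if `u_{T:T+N-1} ∈ Ker C_N` for every `N ∈ ℕ`. -/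
theorem data_driven_undetectable_attacks {n p m : ℕ}
    (A : Matrix (Fin n) (Fin n) ℝ) (B : Matrix (Fin n) (Fin m) ℝ)
    (C : Matrix (Fin p) (Fin n) ℝ) (D : Matrix (Fin p) (Fin m) ℝ)
    (u : ℕ → Fin m → ℝ) (x0 : Fin n → ℝ)
    (T : ℕ) (hT : obsIndex A C + excIndex A + 1 ≤ T)
    (hu : ∀ k : ℕ, k < T → u k = 0) :
    (∀ k : ℕ, output A B C D u x0 k = C.mulVec ((A ^ k).mulVec x0)) ↔
    (∀ N : ℕ,
      (ctrlMat A B C D N).mulVec (fun js : Fin N × Fin m => u (T + (js.1 : ℕ)) js.2) = 0) := by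
  have key : ∀ i, output A B C D u x0 (T + i) = C.mulVec ((A ^ (T + i)).mulVec x0) +
      (C.mulVec (∑ j ∈ Finset.range i, (A ^ (i - j - 1) * B).mulVec (u (T + j)))
        + D.mulVec (u (T + i))) := by
    intro i
    rw [output, traj_after A B u x0 T hu, Matrix.mulVec_add, add_assoc]
  constructor
  · intro h N
    ext ⟨i, r⟩
    have h1 := h (T + i)
    rw [key, add_eq_left] at h1
    rw [ctrl_apply A B C D (fun j => u (T + j)) N i r, h1]
    rfl
  · intro h k
    rcases lt_or_ge k T with hk | hk
    · rw [output, traj_before A B u x0 T hu k hk.le, hu k hk]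
      simp
    · obtain ⟨i, rfl⟩ := Nat.exists_eq_add_of_le hk
      rw [key, add_eq_left]
      ext r
      have h1 := congrFun (h (i + 1)) (⟨i, Nat.lt_succ_self i⟩, r)
      rw [ctrl_apply A B C D (fun j => u (T + j))] at h1
      exact h1
end
end
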